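/- arXiv:1902.00586 — 5 statements merged into one kernel-verified Lean document; each statement's English description precedes it below -/
import Mathlib

section
/- Let h₀, g, μ be positive real numbers and let λ ∈ ℂ with Re λ > 0. Set θ = √(λ(λ+2μ))/√(h₀g) (principal complex square roots) and define, for ζ ∈ [0,1], z₁(ζ) = (1/(gθ))·(((cosh θ − 1)/sinh θ)·cosh(θζ) − sinh(θζ)) and z₂(ζ) = (λ/(g·h₀·θ²))·(cosh(θζ) − 1 − ((cosh θ − 1)/sinh θ)·sinh(θζ)). Then θ ≠ 0, sinh θ ≠ 0, z₂(0) = z₂(1) = 0, and for every ζ ∈ [0,1]: λ·z₁(ζ) + h₀·z₂′(ζ) = 0 and λ·z₂(ζ) + g·z₁′(ζ) + 2μ·z₂(ζ) = −1 (derivatives taken with respect to ζ). -/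
/-- A zero of `sinh` has a square that is real and nonpositive. -/
lemma Complex.sq_eq_neg_of_sinh_eq_zero {θ : ℂ} (h : Complex.sinh θ = 0) :
    ∃ r : ℝ, θ ^ 2 = ((-(r ^ 2) : ℝ) : ℂ) := by
  have hsin : Complex.sin (θ * Complex.I) = 0 := by rw [Complex.sin_mul_I, h, zero_mul]
  obtain ⟨k, hk⟩ := Complex.sin_eq_zero_iff.mp hsin
  refine ⟨k * Real.pi, ?_⟩
  push_cast
  rw [← hk, mul_pow, Complex.I_sq]
  ring

/-- On the open right half-plane, `l (l + 2 μ)` avoids the nonpositive real axis. -/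
lemma mul_add_two_mul_ne_ofReal {l : ℂ} (hl : 0 < l.re) {μ : ℝ} (hμ : 0 < μ) {r : ℝ}
    (hr : r ≤ 0) : l * (l + 2 * (μ : ℂ)) ≠ (r : ℂ) := by
  intro h
  have hre := congrArg Complex.re h
  have him := congrArg Complex.im h
  simp at hre him
  have hl_im : l.im = 0 := by
    have : l.im * (l.re + μ) = 0 := by linarith
    exact (mul_eq_zero.mp this).resolve_right (by positivity)
  rw [hl_im] at hre
  have : 0 < l.re * (l.re + 2 * μ) := by positivity
  linarith

lemma hasDerivAt_cosh_mul_ofReal (θ : ℂ) (ζ : ℝ) :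
    HasDerivAt (fun x : ℝ ↦ Complex.cosh (θ * x)) (Complex.sinh (θ * ζ) * θ) ζ := by
  simpa using ((hasDerivAt_id (ζ : ℂ)).const_mul θ).ccosh.comp_ofReal

lemma hasDerivAt_sinh_mul_ofReal (θ : ℂ) (ζ : ℝ) :
    HasDerivAt (fun x : ℝ ↦ Complex.sinh (θ * x)) (Complex.cosh (θ * ζ) * θ) ζ := by
  simpa using ((hasDerivAt_id (ζ : ℂ)).const_mul θ).csinh.comp_ofReal

/-- Explicit solution of the resolvent equation `(λI − A)z = b` for the generator of the
linearized Saint-Venant system, `A(z₁,z₂) = (−h₀ z₂', −g z₁' − 2μ z₂)`, `b = (0,−1)ᵀ`. -/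
theorem stmt1 (h₀ g μ : ℝ) (hh₀ : 0 < h₀) (hg : 0 < g) (hμ : 0 < μ)
    (l : ℂ) (hl : 0 < l.re)
    (θ : ℂ) (hθ : θ = (l * (l + 2 * (μ:ℂ))) ^ ((1:ℂ)/2) / ((Real.sqrt (h₀ * g) : ℝ) : ℂ))
    (z₁ z₂ : ℝ → ℂ)
    (hz₁ : z₁ = fun ζ : ℝ ↦ (1 / ((g:ℂ) * θ)) *
      (((Complex.cosh θ - 1) / Complex.sinh θ) * Complex.cosh (θ * ζ)
        - Complex.sinh (θ * ζ)))
    (hz₂ : z₂ = fun ζ : ℝ ↦ ((l / ((g:ℂ) * (h₀:ℂ) * θ ^ 2))) *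
      (Complex.cosh (θ * ζ) - 1
        - ((Complex.cosh θ - 1) / Complex.sinh θ) * Complex.sinh (θ * ζ))) :
    θ ≠ 0 ∧ Complex.sinh θ ≠ 0 ∧ z₂ 0 = 0 ∧ z₂ 1 = 0 ∧
      ∀ ζ ∈ Set.Icc (0:ℝ) 1,
        l * z₁ ζ + (h₀:ℂ) * deriv z₂ ζ = 0 ∧
        l * z₂ ζ + (g:ℂ) * deriv z₁ ζ + 2 * (μ:ℂ) * z₂ ζ = -1 := by
  have hgC : (g : ℂ) ≠ 0 := by exact_mod_cast hg.ne'
  have hhC : (h₀ : ℂ) ≠ 0 := by exact_mod_cast hh₀.ne'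
  have hθ_sq : θ ^ 2 * (h₀ * g) = l * (l + 2 * (μ : ℂ)) := by
    have hsqrt : ((Real.sqrt (h₀ * g) : ℝ) : ℂ) ^ 2 = h₀ * g := by
      exact_mod_cast Real.sq_sqrt (mul_pos hh₀ hg).le
    have hcpow (w : ℂ) : (w ^ ((1 : ℂ) / 2)) ^ 2 = w := by
      simp
    rw [hθ, div_pow, hsqrt, hcpow, div_mul_cancel₀ _ (mul_ne_zero hhC hgC)]
  have hsinh : Complex.sinh θ ≠ 0 := by
    intro h
    obtain ⟨r, hr⟩ := Complex.sq_eq_neg_of_sinh_eq_zero h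
    have hneg : -(r ^ 2) * (h₀ * g) ≤ 0 :=
      mul_nonpos_of_nonpos_of_nonneg (neg_nonpos.mpr (sq_nonneg r)) (mul_pos hh₀ hg).le
    refine mul_add_two_mul_ne_ofReal hl hμ hneg ?_
    rw [← hθ_sq, hr]
    push_cast
    ring
  have hθ0 : θ ≠ 0 := by
    rintro h
    exact hsinh (by rw [h, Complex.sinh_zero])
  refine ⟨hθ0, hsinh, by simp [hz₂], ?_, fun ζ _ ↦ ?_⟩
  · simp [hz₂, div_mul_cancel₀ _ hsinh]
  have hcosh' := hasDerivAt_cosh_mul_ofReal θ ζ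
  have hsinh' := hasDerivAt_sinh_mul_ofReal θ ζ
  set K := (Complex.cosh θ - 1) / Complex.sinh θ
  have hd₁ := (((hcosh'.const_mul K).fun_sub hsinh').const_mul (1 / ((g : ℂ) * θ))).deriv
  have hd₂ := (((hcosh'.sub_const 1).fun_sub (hsinh'.const_mul K)).const_mul
    (l / ((g : ℂ) * (h₀ : ℂ) * θ ^ 2))).deriv
  rw [hz₁, hz₂, hd₁, hd₂]
  constructor
  · field_simp
    ring
  · field_simp
    linear_combination (1 + K * Complex.sinh (θ * ζ) - Complex.cosh (θ * ζ)) * hθ_sq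
end

section
/- Let h₀, g, μ be positive real numbers and let λ ∈ ℂ with Re λ > 0. Set θ = √(λ(λ+2μ))/√(h₀g) (principal complex square roots) and define, for ζ ∈ [0,1], z₁(ζ) = (1/(gθ))·(((cosh θ − 1)/sinh θ)·cosh(θζ) − sinh(θζ)). Then sinh θ ≠ 0, z₁(1) + z₁(0) = 0, and λ·(z₁(1) − z₁(0)) = −√(4h₀λ/(g(λ+2μ)))·tanh(θ/2), where the square root is the principal complex square root. -/
namespace Complex

/-- A number of positive real part is the square of a number of positive real part. -/
lemma exists_sq_eq_of_re_pos {w : ℂ} (hw : 0 < w.re) : ∃ a : ℂ, 0 < a.re ∧ a ^ 2 = w := by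
  refine ⟨w ^ (2⁻¹ : ℂ), ?_, by simp⟩
  rw [cpow_inv_two_re]
  have := norm_nonneg w
  exact Real.sqrt_pos.mpr (by linarith)

/-- The sector `|arg| < π / 4` multiplied with itself lies in the right half-plane. -/
lemma mul_re_pos_of_sq_re_pos {a b : ℂ} (ha : 0 < a.re) (hb : 0 < b.re)
    (ha2 : 0 < (a ^ 2).re) (hb2 : 0 < (b ^ 2).re) : 0 < (a * b).re := by
  simp only [pow_two, mul_re] at *
  have h₁ : |a.im| < a.re := abs_lt_of_sq_lt_sq (by nlinarith) ha.le
  have h₂ : |b.im| < b.re := abs_lt_of_sq_lt_sq (by nlinarith) hb.le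
  have h₃ : a.im * b.im ≤ |a.im| * |b.im| := (le_abs_self _).trans (abs_mul _ _).le
  have h₄ : |a.im| * |b.im| < a.re * b.re :=
    mul_lt_mul'' h₁ h₂ (abs_nonneg _) (abs_nonneg _)
  linarith

lemma inv_re_pos {w : ℂ} (hw : 0 < w.re) : 0 < (w⁻¹).re := by
  rw [inv_re]
  exact div_pos hw (normSq_pos.mpr fun h ↦ by simp [h] at hw)

lemma sinh_ne_zero_of_re_pos {w : ℂ} (hw : 0 < w.re) : sinh w ≠ 0 := by
  intro h
  have h₁ : exp w = exp (-w) := by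
    rw [sinh, div_eq_zero_iff, sub_eq_zero] at h
    simpa using h
  have h₂ := congrArg norm h₁
  rw [norm_exp, norm_exp, Real.exp_eq_exp, neg_re] at h₂
  linarith

lemma tanh_half_eq {w : ℂ} (hw : sinh w ≠ 0) : tanh (w / 2) = (cosh w - 1) / sinh w := by
  obtain ⟨v, rfl⟩ : ∃ v, w = 2 * v := ⟨w / 2, by ring⟩
  rw [sinh_two_mul] at hw
  have hs : sinh v ≠ 0 := fun h ↦ by simp [h] at hw
  have hc : cosh v ≠ 0 := fun h ↦ by simp [h] at hw
  rw [mul_div_cancel_left₀ v two_ne_zero, sinh_two_mul, cosh_two_mul, tanh_eq_sinh_div_cosh,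
    cosh_sq]
  field_simp
  ring

end Complex

/-- The boundary evaluations of the first component of the resolvent solution:
`z₁(1) + z₁(0) = 0` and `λ(z₁(1) − z₁(0)) = −√(4h₀λ/(g(λ+2μ)))·tanh(θ/2)`,
which identifies the input-output transfer function of the linearized moving water tank. -/
theorem stmt2 (h₀ g μ : ℝ) (hh₀ : 0 < h₀) (hg : 0 < g) (hμ : 0 < μ)
    (l : ℂ) (hl : 0 < l.re)
    (θ : ℂ) (hθ : θ = (l * (l + 2 * (μ:ℂ))) ^ ((1:ℂ)/2) / ((Real.sqrt (h₀ * g) : ℝ) : ℂ))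
    (z₁ : ℝ → ℂ)
    (hz₁ : z₁ = fun ζ : ℝ ↦ (1 / ((g:ℂ) * θ)) *
      (((Complex.cosh θ - 1) / Complex.sinh θ) * Complex.cosh (θ * ζ)
        - Complex.sinh (θ * ζ))) :
    Complex.sinh θ ≠ 0 ∧ z₁ 1 + z₁ 0 = 0 ∧
      l * (z₁ 1 - z₁ 0)
        = -((4 * (h₀:ℂ) * l / ((g:ℂ) * (l + 2 * (μ:ℂ)))) ^ ((1:ℂ)/2))
            * Complex.tanh (θ / 2) := by
  have hl' : 0 < (l + 2 * (μ : ℂ)).re := by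
    simp only [Complex.add_re, Complex.mul_re, Complex.re_ofNat, Complex.ofReal_re,
      Complex.im_ofNat, Complex.ofReal_im]
    linarith
  obtain ⟨a, ha, hal⟩ := Complex.exists_sq_eq_of_re_pos hl
  obtain ⟨b, hb, hbl⟩ := Complex.exists_sq_eq_of_re_pos hl'
  have hab : 0 < (a * b).re :=
    Complex.mul_re_pos_of_sq_re_pos ha hb (hal ▸ hl) (hbl ▸ hl')
  have hab' : 0 < (a * b⁻¹).re :=
    Complex.mul_re_pos_of_sq_re_pos ha (Complex.inv_re_pos hb) (hal ▸ hl)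
      (by rw [inv_pow, hbl]; exact Complex.inv_re_pos hl')
  have ha0 : a ≠ 0 := fun h ↦ by simp [h] at ha
  have hb0 : b ≠ 0 := fun h ↦ by simp [h] at hb
  have hg0 : (g : ℂ) ≠ 0 := Complex.ofReal_ne_zero.mpr hg.ne'
  set r : ℝ := Real.sqrt (h₀ * g) with hr
  have hr_pos : 0 < r := Real.sqrt_pos.mpr (mul_pos hh₀ hg)
  have hr0 : (r : ℂ) ≠ 0 := Complex.ofReal_ne_zero.mpr hr_pos.ne'
  have hr_sq : (r : ℂ) ^ 2 = h₀ * g := by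
    rw [hr]
    exact_mod_cast Real.sq_sqrt (mul_pos hh₀ hg).le
  have hθ_eq : θ = a * b / r := by
    rw [hθ, ← hbl, ← hal, ← mul_pow, one_div, Complex.sq_cpow_two_inv hab]
  have hθ_re : 0 < θ.re := by
    rw [hθ_eq, Complex.div_ofReal_re]
    exact div_pos hab hr_pos
  have hθ0 : θ ≠ 0 := fun h ↦ by simp [h] at hθ_re
  have hs : Complex.sinh θ ≠ 0 := Complex.sinh_ne_zero_of_re_pos hθ_re
  have hroot : (4 * (h₀ : ℂ) * l / ((g : ℂ) * (l + 2 * (μ : ℂ)))) ^ ((1 : ℂ) / 2)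
      = ((2 * r / g : ℝ) : ℂ) * (a * b⁻¹) := by
    have hre : 0 < (((2 * r / g : ℝ) : ℂ) * (a * b⁻¹)).re := by
      rw [Complex.re_ofReal_mul]
      exact mul_pos (by positivity) hab'
    rw [← Complex.sq_cpow_two_inv hre, one_div, ← hbl, ← hal]
    congr 1
    push_cast
    field_simp
    rw [hr_sq]
    ring
  have h1 : z₁ 1 = -(1 / ((g : ℂ) * θ) * Complex.tanh (θ / 2)) := by
    rw [Complex.tanh_half_eq hs, hz₁]
    simp only [Complex.ofReal_one, mul_one]
    field_simp
    rw [Complex.sinh_sq]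
    ring
  have h0 : z₁ 0 = 1 / ((g : ℂ) * θ) * Complex.tanh (θ / 2) := by
    simp [Complex.tanh_half_eq hs, hz₁]
  refine ⟨hs, by rw [h1, h0]; ring, ?_⟩
  rw [h1, h0, hroot, hθ_eq, ← hal]
  push_cast
  field_simp
  ring
end

section
/- Let h₀, g, μ be positive real numbers and let λ ∈ ℂ with Re λ > 0. Then the family (fun k : ℕ ↦ λ/(λ² + 2μλ + (2k+1)²π²h₀g)) is (absolutely) summable and −√(4h₀λ/(g(λ+2μ)))·tanh(√(λ(λ+2μ))/(2√(h₀g))) = −8h₀ · ∑_{k=0}^{∞} λ/(λ² + 2μλ + (2k+1)²π²h₀g), where all square roots are principal complex square roots. -/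
open Real

namespace Complex

/-- Partial fraction expansion of the tangent. -/
theorem hasSum_pi_mul_tan_pi_mul {x : ℂ} (hx : 2 * x ∈ integerComplement) :
    HasSum (fun k : ℕ ↦ 8 * x / ((2 * (k : ℂ) + 1) ^ 2 - 4 * x ^ 2)) (π * tan (π * x)) := by
  have hx' : x ∈ integerComplement := by
    rintro ⟨n, rfl⟩
    exact hx ⟨2 * n, by push_cast; rfl⟩
  have hdouble := (summable_cotTerm hx).hasSum
  rw [← cot_series_rep' hx] at hdouble
  have hsingle := (summable_cotTerm hx').hasSum
  rw [← cot_series_rep' hx'] at hsingle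
  have hne (n : ℤ) : 2 * x + n ≠ 0 := integerComplement_add_ne_zero hx n
  have hodd : Summable fun k : ℕ ↦ cotTerm (2 * x) (2 * k + 1) :=
    (summable_cotTerm hx).comp_injective (i := fun k ↦ 2 * k + 1) fun a b h ↦ by simpa using h
  have heven : Summable fun k : ℕ ↦ cotTerm (2 * x) (2 * k) :=
    (summable_cotTerm hx).comp_injective (i := fun k ↦ 2 * k) fun a b h ↦ by simpa using h
  have hodd_eq (k : ℕ) : cotTerm (2 * x) (2 * k + 1) = 2⁻¹ * cotTerm x k := by
    have h1 := integerComplement_add_ne_zero hx' (k + 1)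
    have h2 := integerComplement_add_ne_zero hx' (-(k + 1))
    push_cast at h1 h2
    rw [← sub_eq_add_neg] at h2
    have e1 : 2 * x - (((2 * k + 1 : ℕ) : ℂ) + 1) = 2 * (x - (k + 1)) := by push_cast; ring
    have e2 : 2 * x + (((2 * k + 1 : ℕ) : ℂ) + 1) = 2 * (x + (k + 1)) := by push_cast; ring
    rw [cotTerm, cotTerm, e1, e2]
    field_simp
  have hsplit := heven.hasSum.even_add_odd hodd.hasSum
  have htotal := hsplit.unique hdouble
  have hodd_tsum : ∑' k : ℕ, cotTerm (2 * x) (2 * k + 1) = 2⁻¹ * (π * cot (π * x) - 1 / x) := by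
    simp_rw [hodd_eq, tsum_mul_left]
    rw [hsingle.tsum_eq]
  have hvalue : -2 * ∑' k : ℕ, cotTerm (2 * x) (2 * k) = π * tan (π * x) := by
    have hsin : sin (π * x) ≠ 0 := sin_pi_mul_ne_zero hx'
    have hsin2 : sin (π * (2 * x)) ≠ 0 := sin_pi_mul_ne_zero hx
    have hcos : cos (π * x) ≠ 0 := by
      intro h
      apply hsin2
      rw [show (π : ℂ) * (2 * x) = 2 * (π * x) by ring, sin_two_mul, h, mul_zero]
    have hcot : 2 * cot (π * (2 * x)) = cot (π * x) - tan (π * x) := by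
      rw [show (π : ℂ) * (2 * x) = 2 * (π * x) by ring, cot, cot, tan, sin_two_mul, cos_two_mul']
      field_simp
    rw [hodd_tsum] at htotal
    linear_combination -2 * htotal - π * hcot
  rw [← hvalue]
  refine (heven.hasSum.mul_left (-2)).congr_fun ?_
  intro k
  have h1 := hne (2 * k + 1)
  have h2 := hne (-(2 * k + 1))
  push_cast at h1 h2
  rw [← sub_eq_add_neg] at h2
  have e : (2 * (k : ℂ) + 1) ^ 2 - 4 * x ^ 2 = -((2 * x + (2 * k + 1)) * (2 * x - (2 * k + 1))) := by
    ring
  rw [cotTerm, e]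
  push_cast
  rw [div_add_div _ _ h2 h1, mul_div_assoc', div_eq_div_iff (neg_ne_zero.mpr (mul_ne_zero h1 h2))
    (mul_ne_zero h2 h1)]
  ring

/-- Partial fraction expansion of the hyperbolic tangent in the right half-plane. -/
theorem hasSum_tanh {z : ℂ} (hz : 0 < z.re) :
    HasSum (fun k : ℕ ↦ 8 * z / ((2 * (k : ℂ) + 1) ^ 2 * π ^ 2 + 4 * z ^ 2)) (tanh z) := by
  have hpi : (π : ℂ) ≠ 0 := ofReal_ne_zero.mpr pi_ne_zero
  have hx : 2 * (z * I / π) ∈ integerComplement := by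
    rintro ⟨n, hn⟩
    have him := congrArg im ((eq_div_iff hpi).mp (hn.trans (mul_div_assoc 2 (z * I) (π : ℂ)).symm))
    simp at him
    exact hz.ne' him
  have hsum := (hasSum_pi_mul_tan_pi_mul hx).mul_left (π * I)⁻¹
  rw [mul_div_cancel₀ (z * I) hpi, tan_mul_I] at hsum
  have hvalue : (π * I)⁻¹ * (π * (tanh z * I)) = tanh z := by
    field_simp [I_ne_zero]
  rw [hvalue] at hsum
  refine hsum.congr_fun fun k ↦ ?_
  have e : (2 * (k : ℂ) + 1) ^ 2 - 4 * (z * I / π) ^ 2 =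
      ((2 * (k : ℂ) + 1) ^ 2 * π ^ 2 + 4 * z ^ 2) / π ^ 2 := by
    field_simp
    rw [I_sq]
    ring
  rw [e]
  field_simp [I_ne_zero]

theorem arg_add_arg_mem_Ioo {a b : ℂ} (ha : 0 < a.re) (hb : 0 < b.re) :
    a.arg + b.arg ∈ Set.Ioo (-π) π := by
  have h1 := abs_lt.mp (abs_arg_lt_pi_div_two_iff.mpr (Or.inl ha))
  have h2 := abs_lt.mp (abs_arg_lt_pi_div_two_iff.mpr (Or.inl hb))
  constructor <;> linarith [h1.1, h1.2, h2.1, h2.2]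

theorem mul_cpow_of_re_pos {a b : ℂ} (ha : 0 < a.re) (hb : 0 < b.re) (r : ℂ) :
    (a * b) ^ r = a ^ r * b ^ r := by
  have ha0 := ne_zero_of_re_pos ha
  have hb0 := ne_zero_of_re_pos hb
  rw [cpow_def_of_ne_zero (mul_ne_zero ha0 hb0), cpow_def_of_ne_zero ha0, cpow_def_of_ne_zero hb0,
    log_mul ha0 hb0 (Set.Ioo_subset_Ioc_self (arg_add_arg_mem_Ioo ha hb)), add_mul, exp_add]

theorem div_cpow_of_re_pos {a b : ℂ} (ha : 0 < a.re) (hb : 0 < b.re) (r : ℂ) :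
    (a / b) ^ r = a ^ r / b ^ r := by
  have hbi : 0 < b⁻¹.re := by
    rw [inv_re]
    exact div_pos hb (normSq_pos.mpr (ne_zero_of_re_pos hb))
  have harg : b.arg ≠ π := by
    have := abs_lt.mp (abs_arg_lt_pi_div_two_iff.mpr (Or.inl hb))
    linarith [this.2, pi_pos]
  rw [div_eq_mul_inv, mul_cpow_of_re_pos ha hbi, inv_cpow _ _ harg, div_eq_mul_inv]

theorem re_cpow_half_pos_of_mul {a b : ℂ} (ha : 0 < a.re) (hb : 0 < b.re) :
    0 < ((a * b) ^ ((1 : ℂ) / 2)).re := by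
  have ha0 := ne_zero_of_re_pos ha
  have hb0 := ne_zero_of_re_pos hb
  have harg := arg_add_arg_mem_Ioo ha hb
  have e : log (a * b) * ((1 : ℂ) / 2) = log (a * b) / (2 : ℝ) := by push_cast; ring
  rw [cpow_def_of_ne_zero (mul_ne_zero ha0 hb0), e, exp_re, div_ofReal_im, log_im,
    arg_mul ha0 hb0 (Set.Ioo_subset_Ioc_self harg)]
  refine mul_pos (Real.exp_pos _) (Real.cos_pos_of_mem_Ioo ⟨?_, ?_⟩) <;>
    linarith [harg.1, harg.2]

end Complex

/-- Series representation of the transfer function of the linearized moving water tank: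
`𝐇(λ) = −√(4h₀λ/(g(λ+2μ)))·tanh(√(λ(λ+2μ))/(2√(h₀g))) = −8h₀ ∑_{k≥0} λ/(λ²+2μλ+(2k+1)²π²h₀g)`. -/
theorem stmt3 (h₀ g μ : ℝ) (hh₀ : 0 < h₀) (hg : 0 < g) (hμ : 0 < μ)
    (l : ℂ) (hl : 0 < l.re) :
    Summable (fun k : ℕ ↦
      l / (l ^ 2 + 2 * (μ:ℂ) * l + (((2 * (k:ℝ) + 1) ^ 2 * π ^ 2 * h₀ * g : ℝ) : ℂ))) ∧
    -((4 * (h₀:ℂ) * l / ((g:ℂ) * (l + 2 * (μ:ℂ)))) ^ ((1:ℂ)/2))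
        * Complex.tanh ((l * (l + 2 * (μ:ℂ))) ^ ((1:ℂ)/2)
            / (2 * ((Real.sqrt (h₀ * g) : ℝ) : ℂ)))
      = -8 * (h₀:ℂ) * ∑' k : ℕ,
          l / (l ^ 2 + 2 * (μ:ℂ) * l + (((2 * (k:ℝ) + 1) ^ 2 * π ^ 2 * h₀ * g : ℝ) : ℂ)) := by
  set c : ℝ := Real.sqrt (h₀ * g) with hc
  have hc_pos : 0 < c := Real.sqrt_pos.mpr (mul_pos hh₀ hg)
  have hc_sq : (c : ℂ) ^ 2 = h₀ * g := by
    rw [← Complex.ofReal_pow, Real.sq_sqrt (mul_pos hh₀ hg).le, Complex.ofReal_mul]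
  have hc0 : (c : ℂ) ≠ 0 := Complex.ofReal_ne_zero.mpr hc_pos.ne'
  have hg0 : (g : ℂ) ≠ 0 := Complex.ofReal_ne_zero.mpr hg.ne'
  have hb : 0 < (l + 2 * (μ : ℂ)).re := by
    simp
    positivity
  set b : ℂ := l + 2 * (μ : ℂ)
  have hb0 : b ≠ 0 := Complex.ne_zero_of_re_pos hb
  have hK : 0 < 4 * h₀ / g := by positivity
  have hpre : 4 * (h₀ : ℂ) * l / (g * b) = ((4 * h₀ / g : ℝ) : ℂ) * l / b := by
    push_cast
    field_simp
  have hKl : 0 < (((4 * h₀ / g : ℝ) : ℂ) * l).re := by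
    rw [Complex.re_ofReal_mul]
    exact mul_pos hK hl
  have hsqrtK : ((4 * h₀ / g : ℝ) : ℂ) ^ ((1 : ℂ) / 2) * c = 2 * h₀ := by
    have hhalf : ((1 : ℂ) / 2) = ((1 / 2 : ℝ) : ℂ) := by push_cast; rfl
    rw [hhalf, ← Complex.ofReal_cpow hK.le, ← Real.sqrt_eq_rpow, hc, ← Complex.ofReal_mul,
      ← Real.sqrt_mul hK.le, show 4 * h₀ / g * (h₀ * g) = (2 * h₀) ^ 2 by field_simp; ring,
      Real.sqrt_sq (by positivity)]
    push_cast
    rfl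
  have hsq (w : ℂ) : (w ^ ((1 : ℂ) / 2)) ^ 2 = w := by
    rw [one_div]
    exact_mod_cast Complex.cpow_nat_inv_pow w two_ne_zero
  have hs_re := Complex.re_cpow_half_pos_of_mul hl hb
  have hs_sq := hsq (l * b)
  have hs_mul := Complex.mul_cpow_of_re_pos hl hb (1 / 2)
  set s : ℂ := (l * b) ^ ((1 : ℂ) / 2)
  have hs0 : s ≠ 0 := Complex.ne_zero_of_re_pos hs_re
  have hz : 0 < (s / (2 * (c : ℂ))).re := by
    rw [show (2 * (c : ℂ)) = ((2 * c : ℝ) : ℂ) by push_cast; rfl, Complex.div_ofReal_re]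
    positivity
  have hsum : HasSum (fun k : ℕ ↦
      l / (l ^ 2 + 2 * (μ : ℂ) * l + (((2 * (k : ℝ) + 1) ^ 2 * π ^ 2 * h₀ * g : ℝ) : ℂ)))
      (l / (4 * s * c) * Complex.tanh (s / (2 * (c : ℂ)))) := by
    refine ((Complex.hasSum_tanh hz).mul_left (l / (4 * s * c))).congr_fun ?_
    intro k
    have e : (2 * (k : ℂ) + 1) ^ 2 * π ^ 2 + 4 * (s / (2 * (c : ℂ))) ^ 2 =
        (l ^ 2 + 2 * (μ : ℂ) * l + (((2 * (k : ℝ) + 1) ^ 2 * π ^ 2 * h₀ * g : ℝ) : ℂ)) / c ^ 2 := by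
      rw [eq_div_iff (pow_ne_zero 2 hc0)]
      push_cast
      field_simp
      rw [hs_sq, hc_sq]
      ring
    rw [e]
    field_simp
    ring
  refine ⟨hsum.summable, ?_⟩
  have hprefactor : (((4 * h₀ / g : ℝ) : ℂ) * l / b) ^ ((1 : ℂ) / 2) = 2 * h₀ * l / (s * c) := by
    rw [Complex.div_cpow_of_re_pos hKl hb,
      Complex.mul_cpow_of_re_pos (by rwa [Complex.ofReal_re]) hl, hs_mul]
    have hl_sq := hsq l
    have hp0 : l ^ ((1 : ℂ) / 2) ≠ 0 := left_ne_zero_of_mul (hs_mul ▸ hs0)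
    have hq0 : b ^ ((1 : ℂ) / 2) ≠ 0 := right_ne_zero_of_mul (hs_mul ▸ hs0)
    rw [div_eq_div_iff hq0 (mul_ne_zero (mul_ne_zero hp0 hq0) hc0)]
    linear_combination (l ^ ((1 : ℂ) / 2)) ^ 2 * b ^ ((1 : ℂ) / 2) * hsqrtK +
      2 * h₀ * b ^ ((1 : ℂ) / 2) * hl_sq
  rw [hsum.tsum_eq, hpre, hprefactor]
  field_simp
  ring
end

section
/- Let z ∈ ℂ with cosh z ≠ 0. Then the family (fun k : ℕ ↦ 8z/(π²(2k+1)² + 4z²)) is summable and tanh z = ∑_{k=0}^{∞} 8z/(π²(2k+1)² + 4z²). -/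
open Real

open Filter Topology in
/-- The partial fractions of `π * cot (π * x)`, grouped symmetrically about `1 / 2`. -/
lemma tendsto_sum_inv_add_inv_sub_succ {x : ℂ} (hx : x ∈ Complex.integerComplement) :
    Tendsto (fun n : ℕ ↦ ∑ j ∈ Finset.range n, (1 / (x + j) + 1 / (x - (j + 1)))) atTop
      (𝓝 (π * Complex.cot (π * x))) := by
  have hlim : Tendsto (fun n : ℕ ↦ 1 / (x + n)) atTop (𝓝 0) := by
    simp only [one_div]
    refine tendsto_inv₀_cobounded.comp ?_
    exact (tendsto_const_add_cobounded x).comp tendsto_natCast_atTop_cobounded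
  have h := ((tendsto_logDeriv_euler_cot_sub hx).const_add (1 / x)).sub hlim
  rw [add_sub_cancel, sub_zero] at h
  refine h.congr fun n ↦ ?_
  induction n with
  | zero => simp
  | succ n ih =>
    rw [Finset.sum_range_succ, Finset.sum_range_succ, ← ih]
    push_cast
    ring

lemma summable_inv_add_inv_sub_succ {x : ℂ} (hx : x ∈ Complex.integerComplement) :
    Summable fun j : ℕ ↦ 1 / (x + j) + 1 / (x - (j + 1)) := by
  have h : Summable fun j : ℕ ↦ ((x + j) * (x + (j + 1)))⁻¹ := by
    refine ((EisensteinSeries.summable_linear_right_add_one_mul_linear_right x 1 1).comp_injective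
      Nat.cast_injective).congr fun j ↦ ?_
    simp [add_assoc, mul_comm]
  refine ((summable_cotTerm hx).add h).congr fun j ↦ ?_
  have h0 : x + j ≠ 0 := by simpa using Complex.integerComplement_add_ne_zero hx j
  have h1 : x + (j + 1) ≠ 0 := by simpa using Complex.integerComplement_add_ne_zero hx (j + 1)
  have h2 : ((x + j) * (x + (j + 1)))⁻¹ = 1 / (x + j) - 1 / (x + (j + 1)) := by
    field_simp
    ring
  rw [h2, cotTerm]
  ring

/-- Mittag-Leffler partial fraction expansion of the hyperbolic tangent:
`tanh z = ∑_{k≥0} 8z/(π²(2k+1)² + 4z²)` for all `z` with `cosh z ≠ 0`. -/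
theorem stmt4 (z : ℂ) (hz : Complex.cosh z ≠ 0) :
    Summable (fun k : ℕ ↦ 8 * z / (((π:ℂ)) ^ 2 * (2 * (k:ℂ) + 1) ^ 2 + 4 * z ^ 2)) ∧
    Complex.tanh z = ∑' k : ℕ, 8 * z / (((π:ℂ)) ^ 2 * (2 * (k:ℂ) + 1) ^ 2 + 4 * z ^ 2) := by
  have hπ : (π : ℂ) ≠ 0 := Complex.ofReal_ne_zero.2 pi_ne_zero
  obtain ⟨x, hxz⟩ : ∃ x : ℂ, π * x = z * Complex.I + π / 2 :=
    ⟨z * Complex.I / π + 1 / 2, by field_simp⟩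
  have hsin : Complex.sin (π * x) = Complex.cosh z := by
    rw [hxz, Complex.sin_add_pi_div_two, Complex.cos_mul_I]
  have hcos : Complex.cos (π * x) = -(Complex.sinh z * Complex.I) := by
    rw [hxz, Complex.cos_add_pi_div_two, Complex.sin_mul_I]
  have hx : x ∈ Complex.integerComplement := by
    rintro ⟨n, rfl⟩
    apply hz
    rw [← hsin, mul_comm, Complex.sin_int_mul_pi]
  have hcot : Complex.I / π * (π * Complex.cot (π * x)) = Complex.tanh z := by
    rw [Complex.cot, hsin, hcos, Complex.tanh_eq_sinh_div_cosh]
    field_simp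
    simp
  have hterm (k : ℕ) : Complex.I / π * (1 / (x + k) + 1 / (x - (k + 1))) =
      8 * z / ((π : ℂ) ^ 2 * (2 * (k : ℂ) + 1) ^ 2 + 4 * z ^ 2) := by
    have h0 : x + k ≠ 0 := by simpa using Complex.integerComplement_add_ne_zero hx k
    have h1 : x - (k + 1) ≠ 0 := by
      simpa [sub_eq_add_neg] using Complex.integerComplement_add_ne_zero hx (-(k + 1))
    have hz' : z = π * (1 / 2 - x) * Complex.I := by
      linear_combination Complex.I * hxz + z * Complex.I_sq
    have hden : (π : ℂ) ^ 2 * (2 * (k : ℂ) + 1) ^ 2 + 4 * z ^ 2 =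
        -4 * π ^ 2 * ((x + k) * (x - (k + 1))) := by
      rw [hz']
      linear_combination (4 * π ^ 2 * (1 / 2 - x) ^ 2 : ℂ) * Complex.I_sq
    rw [hden, hz']
    field_simp
    ring
  have hsum := ((summable_inv_add_inv_sub_succ hx).mul_left (Complex.I / π)).congr hterm
  refine ⟨hsum, ?_⟩
  rw [← hcot, ← tsum_congr hterm, tsum_mul_left,
    ((summable_inv_add_inv_sub_succ hx).hasSum_iff_tendsto_nat.2
      (tendsto_sum_inv_add_inv_sub_succ hx)).tsum_eq]
end

section
/- Let μ, σ be real numbers with σ > μ > 0, let φ = √(σ² − μ²), and let t ≥ 0. Then there exist real numbers α, β, ω with φ ≤ α ≤ σ, φ ≤ β ≤ σ, φ ≤ ω ≤ σ such that cos(φt) − (μ/φ)·sin(φt) = t²·(μ²(α − σ)/(σ + φ))·cos(ωt) + t·(μ³/(φ(σ + φ)))·cos(βt) + (t·(σ − φ) − μ/φ)·sin(σt) + cos(σt). Moreover σ − φ = μ²/(σ + φ), so the coefficient μ²(α − σ)/(σ + φ) lies in the interval [−μ⁴/(σ + φ)², 0]. -/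
/-- The mean value theorem on a possibly degenerate closed interval. -/
theorem exists_mem_Icc_sub_eq_mul {f f' : ℝ → ℝ} (hf : ∀ x, HasDerivAt f (f' x) x)
    {a b : ℝ} (hab : a ≤ b) : ∃ c ∈ Set.Icc a b, f b - f a = f' c * (b - a) := by
  rcases hab.eq_or_lt with rfl | hlt
  · exact ⟨a, by simp, by simp⟩
  · obtain ⟨c, hc, h⟩ := exists_hasDerivAt_eq_slope f f' hlt
      (fun x _ => (hf x).continuousAt.continuousWithinAt) (fun x _ => hf x)
    exact ⟨c, Set.Ioo_subset_Icc_self hc, by rw [h, div_mul_cancel₀ _ (sub_pos.2 hlt).ne']⟩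

theorem hasDerivAt_sin_mul_const (t x : ℝ) :
    HasDerivAt (fun x => Real.sin (x * t)) (Real.cos (x * t) * t) x :=
  (hasDerivAt_mul_const t).sin

theorem hasDerivAt_cos_mul_const (t x : ℝ) :
    HasDerivAt (fun x => Real.cos (x * t)) (-Real.sin (x * t) * t) x :=
  (hasDerivAt_mul_const t).cos

/-- Mean-value-theorem decomposition of `g_n(t) = cos(φt) − (μ/φ)sin(φt)` in terms of the
unperturbed harmonics `sin(σt)`, `cos(σt)`, with intermediate points `α, β, ω ∈ [φ, σ]`
and coefficient bounds. -/
theorem stmt9 (μ σ : ℝ) (hμ : 0 < μ) (hσ : μ < σ)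
    (φ : ℝ) (hφ : φ = Real.sqrt (σ ^ 2 - μ ^ 2))
    (t : ℝ) (ht : 0 ≤ t) :
    (∃ α β ω : ℝ, φ ≤ α ∧ α ≤ σ ∧ φ ≤ β ∧ β ≤ σ ∧ φ ≤ ω ∧ ω ≤ σ ∧
      Real.cos (φ * t) - (μ / φ) * Real.sin (φ * t)
        = t ^ 2 * (μ ^ 2 * (α - σ) / (σ + φ)) * Real.cos (ω * t)
          + t * (μ ^ 3 / (φ * (σ + φ))) * Real.cos (β * t)
          + (t * (σ - φ) - μ / φ) * Real.sin (σ * t)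
          + Real.cos (σ * t)
      ∧ μ ^ 2 * (α - σ) / (σ + φ) ∈ Set.Icc (-(μ ^ 4) / (σ + φ) ^ 2) 0) ∧
    σ - φ = μ ^ 2 / (σ + φ) := by
  have hpos : 0 < σ ^ 2 - μ ^ 2 := by nlinarith
  have hφ0 : 0 < φ := hφ ▸ Real.sqrt_pos.2 hpos
  have hsq : φ ^ 2 = σ ^ 2 - μ ^ 2 := hφ ▸ Real.sq_sqrt hpos.le
  have hσφ : 0 < σ + φ := by linarith
  have hdiff : σ - φ = μ ^ 2 / (σ + φ) := by
    rw [eq_div_iff hσφ.ne']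
    linarith
  have hle : φ ≤ σ := sub_nonneg.1 (hdiff ▸ by positivity)
  obtain ⟨α, hα, hcos⟩ := exists_mem_Icc_sub_eq_mul (hasDerivAt_cos_mul_const t) hle
  obtain ⟨β, hβ, hsin⟩ := exists_mem_Icc_sub_eq_mul (hasDerivAt_sin_mul_const t) hle
  obtain ⟨ω, hω, hsinα⟩ := exists_mem_Icc_sub_eq_mul (hasDerivAt_sin_mul_const t) hα.2
  have hcoef : μ ^ 2 * (α - σ) / (σ + φ) = (σ - φ) * (α - σ) := by
    rw [hdiff]
    ring
  have hcoef' : μ ^ 3 / (φ * (σ + φ)) = μ / φ * (σ - φ) := by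
    rw [hdiff, div_mul_div_comm]
    ring
  have hbound : -(μ ^ 4) / (σ + φ) ^ 2 = -(σ - φ) ^ 2 := by
    rw [hdiff, div_pow]
    ring
  refine ⟨⟨α, β, ω, hα.1, hα.2, hβ.1, hβ.2, hα.1.trans hω.1, hω.2, ?_, ?_⟩, hdiff⟩
  · rw [hcoef, hcoef']
    linear_combination -hcos + μ / φ * hsin - t * (σ - φ) * hsinα
  · rw [hcoef, hbound]
    constructor <;> nlinarith [hα.1, hα.2]
end
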